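/- For every ε > 0 there exists N such that for every k > N, every h with 1 ≤ h ≤ k, and every selection (S_1, ..., S_h) of level h, one has |δ_h^{R} − δ_h| < ε, where δ_h^{R} = p_h · c^R / (m_k − p_k²) with c^R the number of permitted integers in the interval [p_k² + 1, m_k], and δ_h = c_h · p_h / m_h. -/

import Mathlib

/-- The `h`-th prime number (1-indexed): `nthPrime 1 = 2`, `nthPrime 2 = 3`, ... -/
noncomputable def nthPrime (h : ℕ) : ℕ := Nat.nth Nat.Prime (h - 1)

/-- `mK k = p_1 * p_2 * ⋯ * p_k`, the product of the first `k` primes. -/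
noncomputable def mK (k : ℕ) : ℕ := ∏ h ∈ Finset.Icc 1 k, nthPrime h

/-- `cK k = (p_1 - 1) * (p_2 - 2) * ⋯ * (p_k - 2)`. -/
noncomputable def cK (k : ℕ) : ℕ := (nthPrime 1 - 1) * ∏ h ∈ Finset.Icc 2 k, (nthPrime h - 2)

/-- A selection of level `k`: a family of sets of residues `S h ⊆ {0, …, p_h - 1}`
with `|S 1| = 1` and `|S h| = 2` for `2 ≤ h ≤ k`. -/
def IsSelection (k : ℕ) (S : ℕ → Finset ℕ) : Prop :=
  (∀ h, 1 ≤ h → h ≤ k → S h ⊆ Finset.range (nthPrime h)) ∧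
    (S 1).card = 1 ∧ ∀ h, 2 ≤ h → h ≤ k → (S h).card = 2

/-- `n` is permitted for a selection of level `k` if for every `1 ≤ h ≤ k` the residue of
`n` modulo `p_h` is not a selected remainder. -/
def Permitted (k : ℕ) (S : ℕ → Finset ℕ) (n : ℕ) : Prop :=
  ∀ h ∈ Finset.Icc 1 k, n % nthPrime h ∉ S h

noncomputable instance (k : ℕ) (S : ℕ → Finset ℕ) : DecidablePred (Permitted k S) := fun n =>
  inferInstanceAs (Decidable (∀ h ∈ Finset.Icc 1 k, n % nthPrime h ∉ S h))

/-- The density `δ_k = c_k · p_k / m_k` of permitted `k`-tuples within a period. -/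
noncomputable def deltaK (k : ℕ) : ℝ := (cK k : ℝ) * nthPrime k / mK k

/-!
By the Chinese remainder theorem the permitted integers are periodic with period `m_h`, with exactly
`c_h` of them in each period; as `m_h ∣ m_k`, the interval `[1, m_k]` has the exact density
`c_h / m_h`. Removing its first `p_k²` elements perturbs the density by at most
`p_k² / (m_k - p_k²)`, hence `δ_h` by at most `p_k³ / (m_k - p_k²)`, uniformly in `h ≤ k` and in the
selection. By Bertrand's postulate consecutive primes differ by a factor of at most `2`, so `m_k`
outgrows every fixed power of `p_k` and this error tends to `0`.
-/

open Finset Filter Function Topology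

section ChineseRemainder

variable {ι : Type*} {s : Finset ι} {q : ι → ℕ}

lemma modEq_prod_of_forall_modEq (hq : (s : Set ι).Pairwise (Nat.Coprime on q)) {a b : ℕ}
    (h : ∀ i ∈ s, a ≡ b [MOD q i]) : a ≡ b [MOD ∏ i ∈ s, q i] := by
  simp only [Nat.modEq_iff_dvd, Nat.cast_prod] at h ⊢
  exact Finset.prod_dvd_of_coprime (fun i hi j hj hij => (hq hi hj hij).isCoprime) h

lemma card_filter_range_prod_forall_mod_mem (hq : (s : Set ι).Pairwise (Nat.Coprime on q))
    {T : ι → Finset ℕ} (hT : ∀ i ∈ s, T i ⊆ range (q i)) :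
    #{n ∈ range (∏ i ∈ s, q i) | ∀ i ∈ s, n % q i ∈ T i} = ∏ i ∈ s, #(T i) := by
  classical
  rw [← card_pi]
  refine card_nbij (fun n i _ => n % q i) ?_ ?_ ?_
  · intro n hn
    exact mem_pi.2 (mem_filter.1 hn).2
  · intro a ha b hb hab
    have h_modEq : a ≡ b [MOD ∏ i ∈ s, q i] :=
      modEq_prod_of_forall_modEq hq fun i hi => congrFun₂ hab i hi
    exact h_modEq.eq_of_lt_of_lt (mem_range.1 (mem_filter.1 ha).1) (mem_range.1 (mem_filter.1 hb).1)
  · intro f hf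
    have hfT : ∀ i hi, f i hi ∈ T i := mem_pi.1 hf
    have hf_lt : ∀ i hi, f i hi < q i := fun i hi => mem_range.1 (hT i hi (hfT i hi))
    have hq0 : ∀ i ∈ s, q i ≠ 0 := fun i hi => (hf_lt i hi).ne_bot
    let a : ι → ℕ := fun i => if hi : i ∈ s then f i hi else 0
    let x := Nat.chineseRemainderOfFinset a q s hq0 hq
    have hx : ∀ i (hi : i ∈ s), x % q i = f i hi := fun i hi => by
      rw [x.2 i hi, Nat.mod_eq_of_lt] <;> simp only [a, dif_pos hi, hf_lt i hi]
    refine ⟨x, mem_filter.2 ⟨mem_range.2 ?_, fun i hi => hx i hi ▸ hfT i hi⟩, ?_⟩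
    · exact Nat.chineseRemainderOfFinset_lt_prod a q hq0 hq
    · exact funext₂ hx

end ChineseRemainder

section PeriodicCounting

variable {P : ℕ → Prop} [DecidablePred P] {m : ℕ}

lemma count_mul_of_periodic (hP : Periodic P m) (t : ℕ) :
    Nat.count P (t * m) = t * Nat.count P m := by
  induction t with
  | zero => simp
  | succ t ih =>
    have h_shift : (fun n => P (t * m + n)) = P :=
      funext fun n => by rw [add_comm, ← smul_eq_mul, hP.nsmul t n]
    simp only [Nat.succ_mul, Nat.count_add, ih, h_shift]

lemma card_filter_Icc_one_mul_of_periodic (hP : Periodic P m) {M : ℕ} (hM : m ∣ M) :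
    #{n ∈ Icc 1 M | P n} * m = Nat.count P m * M := by
  obtain ⟨t, rfl⟩ := hM
  have h_period : Periodic P (t * m) := hP.nsmul t
  rw [← Ico_add_one_right_eq_Icc, add_comm, mul_comm m t,
    Nat.filter_Ico_card_eq_of_periodic _ _ _ h_period, count_mul_of_periodic hP]
  ring

lemma card_filter_Icc_one_add_card_filter_Icc {a M : ℕ} (h : a ≤ M) :
    #{n ∈ Icc 1 a | P n} + #{n ∈ Icc (a + 1) M | P n} = #{n ∈ Icc 1 M | P n} := by
  simp only [← Ico_add_one_right_eq_Icc, card_filter]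
  exact sum_Ico_consecutive _ (by lia) (by lia)

lemma abs_tail_density_sub_le_of_periodic (hP : Periodic P m) {M a : ℕ} (hM : m ∣ M) (ha : a < M) :
    |(#{n ∈ Icc (a + 1) M | P n} : ℝ) / (M - a) - Nat.count P m / m| ≤ a / (M - a) := by
  have hm0 : (m : ℝ) ≠ 0 := by exact_mod_cast ne_zero_of_dvd_ne_zero ha.ne_bot hM
  have h_gap : (0 : ℝ) < M - a := sub_pos.2 (by exact_mod_cast ha)
  have h_head : (#{n ∈ Icc 1 a | P n} : ℝ) ≤ a := by
    exact_mod_cast (card_filter_le (Icc 1 a) P).trans_eq (Nat.card_Icc 1 a)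
  have h_split : (#{n ∈ Icc 1 a | P n} + #{n ∈ Icc (a + 1) M | P n} : ℝ)
      = Nat.count P m / m * M := by
    rw [div_mul_eq_mul_div, eq_div_iff hm0]
    rw [← Nat.cast_add, card_filter_Icc_one_add_card_filter_Icc ha.le]
    exact_mod_cast card_filter_Icc_one_mul_of_periodic hP hM
  set head : ℝ := ((#{n ∈ Icc 1 a | P n} : ℕ) : ℝ)
  set tail : ℝ := ((#{n ∈ Icc (a + 1) M | P n} : ℕ) : ℝ)
  set d : ℝ := Nat.count P m / m
  have hd_nonneg : 0 ≤ d := by positivity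
  have hd_le_one : d ≤ 1 := div_le_one_of_le₀ (mod_cast Nat.count_le P) (by positivity)
  calc |tail / (M - a) - d| = |d * a - head| / (M - a) := by
        rw [div_sub' h_gap.ne', abs_div, abs_of_pos h_gap]
        congr 2
        linear_combination h_split
    _ ≤ a / (M - a) := by
        gcongr
        exact abs_sub_le_of_nonneg_of_le (by positivity)
          (mul_le_of_le_one_left (by positivity) hd_le_one) (by positivity) h_head

end PeriodicCounting

section Primes

lemma nth_prime_succ_le_two_mul (n : ℕ) :
    Nat.nth Nat.Prime (n + 1) ≤ 2 * Nat.nth Nat.Prime n := by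
  obtain ⟨q, hq, h_lt, h_le⟩ :=
    Nat.exists_prime_lt_and_le_two_mul _ (Nat.prime_nth_prime n).ne_zero
  by_contra! h
  exact h_lt.not_ge (Nat.le_nth_of_lt_nth_succ (h_le.trans_lt h) hq)

lemma prime_nthPrime (h : ℕ) : (nthPrime h).Prime := Nat.prime_nth_prime _

lemma nthPrime_mono : Monotone nthPrime :=
  (Nat.nth_monotone Nat.infinite_setOfPred_prime).comp fun _ _ h => Nat.sub_le_sub_right h 1

lemma nthPrime_injOn (k : ℕ) : Set.InjOn nthPrime (Icc 1 k) := by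
  intro a ha b hb hab
  have h_pred : a - 1 = b - 1 := Nat.nth_injective Nat.infinite_setOfPred_prime hab
  rw [mem_coe, mem_Icc] at ha hb
  lia

lemma pairwise_coprime_nthPrime (k : ℕ) :
    (Icc 1 k : Set ℕ).Pairwise (Nat.Coprime on nthPrime) := fun _ ha _ hb hab =>
  (Nat.coprime_primes (prime_nthPrime _) (prime_nthPrime _)).2 ((nthPrime_injOn k).ne ha hb hab)

lemma nthPrime_succ_le_two_mul (k : ℕ) : nthPrime (k + 1) ≤ 2 * nthPrime k := by
  cases k with
  | zero =>
    -- Truncated subtraction in the index makes `nthPrime 0 = nthPrime 1`.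
    exact Nat.le_mul_of_pos_left _ two_pos
  | succ k => exact nth_prime_succ_le_two_mul k

lemma le_nthPrime (k : ℕ) : k ≤ nthPrime k := by
  have h_le : k - 1 + 2 ≤ nthPrime k := Nat.add_two_le_nth_prime (k - 1)
  lia

lemma tendsto_nthPrime_atTop : Tendsto nthPrime atTop atTop :=
  tendsto_atTop_mono le_nthPrime tendsto_id

lemma mK_succ (k : ℕ) : mK (k + 1) = mK k * nthPrime (k + 1) :=
  prod_Icc_succ_top (by lia) _

lemma mK_pos (k : ℕ) : 0 < mK k := prod_pos fun i _ => (prime_nthPrime i).pos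

lemma mK_dvd_mK {h k : ℕ} (hk : h ≤ k) : mK h ∣ mK k :=
  prod_dvd_prod_of_subset _ _ _ (Icc_subset_Icc_right hk)

lemma nthPrime_pow_le_mul_mK {d k : ℕ} (h : d ≤ k) : nthPrime k ^ d ≤ 2 ^ d.choose 2 * mK k := by
  induction d generalizing k with
  | zero => simpa using Nat.succ_le_of_lt (mK_pos k)
  | succ d ih =>
    obtain ⟨k, rfl⟩ := Nat.exists_eq_add_of_le' (Nat.le_of_add_left_le h)
    calc nthPrime (k + 1) ^ (d + 1)
        = nthPrime (k + 1) ^ d * nthPrime (k + 1) := pow_succ _ _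
      _ ≤ (2 * nthPrime k) ^ d * nthPrime (k + 1) := by
          gcongr
          exact nthPrime_succ_le_two_mul k
      _ = 2 ^ d * nthPrime k ^ d * nthPrime (k + 1) := by rw [mul_pow]
      _ ≤ 2 ^ d * (2 ^ d.choose 2 * mK k) * nthPrime (k + 1) := by
          gcongr
          exact ih (Nat.le_of_succ_le_succ h)
      _ = 2 ^ (d + 1).choose 2 * mK (k + 1) := by
          rw [mK_succ, Nat.choose_succ_succ' d 1, Nat.choose_one_right, pow_add]
          ring

lemma tendsto_nthPrime_pow_div_mK (d : ℕ) :
    Tendsto (fun k => (nthPrime k : ℝ) ^ d / mK k) atTop (𝓝 0) := by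
  have h_bound : ∀ᶠ k in atTop,
      (nthPrime k : ℝ) ^ d / mK k ≤ 2 ^ (d + 1).choose 2 / nthPrime k := by
    filter_upwards [eventually_ge_atTop (d + 1)] with k hk
    have hp : (0 : ℝ) < nthPrime k := by exact_mod_cast (prime_nthPrime k).pos
    have hm : (0 : ℝ) < mK k := by exact_mod_cast mK_pos k
    rw [div_le_div_iff₀ hm hp, ← pow_succ]
    exact_mod_cast nthPrime_pow_le_mul_mK hk
  exact squeeze_zero' (.of_forall fun k => by positivity) h_bound
    (tendsto_const_nhds.div_atTop (tendsto_natCast_atTop_atTop.comp tendsto_nthPrime_atTop))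

lemma eventually_sq_nthPrime_lt_mK : ∀ᶠ k in atTop, nthPrime k ^ 2 < mK k := by
  filter_upwards [(tendsto_nthPrime_pow_div_mK 2).eventually_lt_const one_pos] with k hk
  exact_mod_cast (div_lt_one (by exact_mod_cast mK_pos k)).1 hk

lemma tendsto_nthPrime_cube_div_mK_sub_sq :
    Tendsto (fun k => (nthPrime k : ℝ) ^ 3 / (mK k - (nthPrime k : ℝ) ^ 2)) atTop (𝓝 0) := by
  have h_quot := (tendsto_nthPrime_pow_div_mK 3).div
    ((tendsto_nthPrime_pow_div_mK 2).const_sub 1) (by norm_num)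
  rw [zero_div] at h_quot
  refine h_quot.congr fun k => ?_
  have hm : (mK k : ℝ) ≠ 0 := by exact_mod_cast (mK_pos k).ne'
  rw [Pi.div_apply, one_sub_div hm, div_div_div_cancel_right₀ hm]

end Primes

section Permitted

variable {h : ℕ} {S : ℕ → Finset ℕ}

lemma periodic_permitted (h : ℕ) (S : ℕ → Finset ℕ) : Periodic (Permitted h S) (mK h) := by
  intro n
  refine propext (forall₂_congr fun j hj => ?_)
  obtain ⟨r, hr⟩ : nthPrime j ∣ mK h := dvd_prod_of_mem _ hj
  rw [hr, Nat.add_mul_mod_self_left]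

lemma count_permitted_eq_prod (hS : ∀ j ∈ Icc 1 h, S j ⊆ range (nthPrime j)) :
    Nat.count (Permitted h S) (mK h) = ∏ j ∈ Icc 1 h, (nthPrime j - #(S j)) := by
  have h_mem (n : ℕ) :
      Permitted h S n ↔ ∀ j ∈ Icc 1 h, n % nthPrime j ∈ range (nthPrime j) \ S j :=
    forall₂_congr fun j _ => by
      rw [Finset.mem_sdiff, mem_range, and_iff_right (Nat.mod_lt n (prime_nthPrime j).pos)]
  rw [Nat.count_eq_card_filter_range, filter_congr fun n _ => h_mem n, mK,
    card_filter_range_prod_forall_mod_mem (pairwise_coprime_nthPrime h) fun _ _ => sdiff_subset]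
  exact prod_congr rfl fun j hj => by rw [card_sdiff_of_subset (hS j hj), card_range]

lemma IsSelection.count_permitted_eq_cK (hS : IsSelection h S) (hh : 1 ≤ h) :
    Nat.count (Permitted h S) (mK h) = cK h := by
  obtain ⟨h_range, h_one, h_two⟩ := hS
  rw [count_permitted_eq_prod fun j hj => h_range j (mem_Icc.1 hj).1 (mem_Icc.1 hj).2,
    ← mul_prod_Ioc_eq_prod_Icc hh, ← Icc_add_one_left_eq_Ioc, h_one, cK]
  congr 1
  exact prod_congr rfl fun j hj => by rw [h_two j (mem_Icc.1 hj).1 (mem_Icc.1 hj).2]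

lemma IsSelection.abs_right_density_sub_le (hS : IsSelection h S) (hh : 1 ≤ h) {k : ℕ} (hk : h ≤ k)
    (h_lt : nthPrime k ^ 2 < mK k) :
    |(nthPrime h : ℝ) * (#{n ∈ Icc (nthPrime k ^ 2 + 1) (mK k) | Permitted h S n} : ℝ)
        / (mK k - (nthPrime k : ℝ) ^ 2) - (cK h : ℝ) * nthPrime h / mK h|
      ≤ (nthPrime k : ℝ) ^ 3 / (mK k - (nthPrime k : ℝ) ^ 2) := by
  have h_tail := abs_tail_density_sub_le_of_periodic (periodic_permitted h S) (mK_dvd_mK hk) h_lt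
  rw [hS.count_permitted_eq_cK hh, Nat.cast_pow] at h_tail
  rw [mul_div_assoc, mul_comm (cK h : ℝ), mul_div_assoc, ← mul_sub, abs_mul, Nat.abs_cast]
  calc _ ≤ (nthPrime k : ℝ) * (nthPrime k ^ 2 / (mK k - (nthPrime k : ℝ) ^ 2)) :=
        mul_le_mul (mod_cast nthPrime_mono hk) h_tail (abs_nonneg _) (Nat.cast_nonneg _)
    _ = nthPrime k ^ 3 / (mK k - (nthPrime k : ℝ) ^ 2) := by ring

end Permitted

/-- The density in the right interval converges uniformly: for every `ε > 0` there is `N`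
such that for all `k > N`, all `1 ≤ h ≤ k` and every selection of level `h`,
`|δ_h^R - δ_h| < ε`, where `δ_h^R = p_h · c^R / (m_k - p_k²)` with `c^R` the number of
permitted integers in `[p_k² + 1, m_k]`, and `δ_h = c_h · p_h / m_h`. -/
theorem right_density_uniformly_close (ε : ℝ) (hε : 0 < ε) :
    ∃ N : ℕ, ∀ k : ℕ, k > N → ∀ h : ℕ, 1 ≤ h → h ≤ k →
      ∀ S : ℕ → Finset ℕ, IsSelection h S →
        |(nthPrime h : ℝ) *
            (((Finset.Icc (nthPrime k ^ 2 + 1) (mK k)).filter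
              (fun n => Permitted h S n)).card : ℝ)
            / ((mK k : ℝ) - (nthPrime k : ℝ) ^ 2)
          - (cK h : ℝ) * nthPrime h / mK h| < ε := by
  obtain ⟨N, hN⟩ := eventually_atTop.1 (eventually_sq_nthPrime_lt_mK.and
    (tendsto_nthPrime_cube_div_mK_sub_sq.eventually_lt_const hε))
  refine ⟨N, fun k hk h h_one hhk S hS => ?_⟩
  obtain ⟨h_lt, h_small⟩ := hN k hk.le
  exact (hS.abs_right_density_sub_le h_one hhk h_lt).trans_lt h_small
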